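/- Let X be a Tychonoff space and λ ∈ Ψ. The space C_λ(X) has countable fan tightness if and only if X has property S_fin(Λ(λ), Λ(λ)). -/

import Mathlib

open Set Filter Topology TopologicalSpace ContinuousMap

/-- A subset `A` of `X` is *C-compact* if `f '' A` is compact in `ℝ` for every
continuous real-valued function `f` on `X`. -/
def IsCCompact {X : Type*} [TopologicalSpace X] (A : Set X) : Prop :=
  ∀ f : C(X, ℝ), IsCompact (f '' A)

/-- The `λ`-open (set-open) topology on `C(X, ℝ)`, generated by the subbasic sets
`[F, U] = {f : f '' F ⊆ U}` for `F ∈ lam` and `U ⊆ ℝ` open. -/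
def setOpenTopology {X : Type*} [TopologicalSpace X] (lam : Set (Set X)) :
    TopologicalSpace C(X, ℝ) :=
  TopologicalSpace.generateFrom
    {S | ∃ F ∈ lam, ∃ U : Set ℝ, IsOpen U ∧ S = {f : C(X, ℝ) | f '' F ⊆ U}}

/-- Membership in the collection `Ψ`: a family of nonempty closed C-compact subsets of `X`
forming a π-network, hereditary with respect to (closed) C-compact subsets of its elements,
and maximal among families of nonempty sets inducing the same set-open topology. -/
structure MemPsi {X : Type*} [TopologicalSpace X] (lam : Set (Set X)) : Prop where
  nonempty : ∀ A ∈ lam, A.Nonempty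
  closed : ∀ A ∈ lam, IsClosed A
  ccompact : ∀ A ∈ lam, IsCCompact A
  piNetwork : ∀ U : Set X, IsOpen U → U.Nonempty → ∃ A ∈ lam, A ⊆ U
  hereditary : ∀ A ∈ lam, ∀ B : Set X, B ⊆ A → B.Nonempty → IsClosed B → IsCCompact B →
    B ∈ lam
  maximal : ∀ lam' : Set (Set X), (∀ A ∈ lam', A.Nonempty) →
    setOpenTopology lam' = setOpenTopology lam → lam' ⊆ lam

/-- A cozero (functional open) subset of `X`: the complement of a zero-set. -/
def IsCozero {X : Type*} [TopologicalSpace X] (U : Set X) : Prop :=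
  ∃ f : C(X, ℝ), U = {x | f x ≠ 0}

/-- `𝒰` is a `λ`-f-cover: a family of cozero sets, not containing `X`, such that every
member of `lam` is contained in some member of `𝒰`. -/
def IsFCover {X : Type*} [TopologicalSpace X] (lam : Set (Set X)) (𝒰 : Set (Set X)) : Prop :=
  (Set.univ : Set X) ∉ 𝒰 ∧ (∀ U ∈ 𝒰, IsCozero U) ∧ ∀ A ∈ lam, ∃ U ∈ 𝒰, A ⊆ U

/-- `Λ(λ)`: the collection of all `λ`-f-covers of `X`. -/
def fCovers {X : Type*} [TopologicalSpace X] (lam : Set (Set X)) : Set (Set (Set X)) :=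
  {𝒰 | IsFCover lam 𝒰}

/-- The selection principle `S₁(𝒜, ℬ)`. -/
def S1 {α : Type*} (𝒜 ℬ : Set (Set α)) : Prop :=
  ∀ A : ℕ → Set α, (∀ n, A n ∈ 𝒜) →
    ∃ b : ℕ → α, (∀ n, b n ∈ A n) ∧ Set.range b ∈ ℬ

/-- The selection principle `S_fin(𝒜, ℬ)`. -/
def Sfin {α : Type*} (𝒜 ℬ : Set (Set α)) : Prop :=
  ∀ A : ℕ → Set α, (∀ n, A n ∈ 𝒜) →
    ∃ B : ℕ → Set α, (∀ n, (B n).Finite ∧ B n ⊆ A n) ∧ (⋃ n, B n) ∈ ℬ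

/-- `Ω_y` with respect to the topology `t`: sets having `y` in their closure but not
containing `y`. -/
def OmegaPt {Y : Type*} (t : TopologicalSpace Y) (y : Y) : Set (Set Y) :=
  {A | y ∈ @closure Y t A ∧ y ∉ A}

/-- Countable `(t₁, t₂)`-tightness of a bitopological space. -/
def CountableBiTightness {Y : Type*} (t1 t2 : TopologicalSpace Y) : Prop :=
  ∀ A : Set Y, ∀ f ∈ @closure Y t1 A, ∃ B ⊆ A, B.Countable ∧ f ∈ @closure Y t2 B

/-- `X` is `λ`-`μ`-Lindelöf: every `λ`-f-cover has a countable subfamily which is a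
`μ`-f-cover. -/
def LamMuLindelof {X : Type*} [TopologicalSpace X] (lam mu : Set (Set X)) : Prop :=
  ∀ 𝒰 : Set (Set X), IsFCover lam 𝒰 → ∃ 𝒱 ⊆ 𝒰, 𝒱.Countable ∧ IsFCover mu 𝒱

/-- Countable `(t₁, t₂)`-T-tightness: for every uncountable regular cardinal `κ` and every
increasing `κ`-indexed sequence of `t₁`-closed sets, the union is `t₂`-closed. -/
def CountableBiTTightness {Y : Type*} (t1 t2 : TopologicalSpace Y) : Prop :=
  ∀ κ : Cardinal.{0}, Cardinal.aleph0 < κ → κ.IsRegular →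
    ∀ A : κ.ord.ToType → Set Y, Monotone A → (∀ α, @IsClosed Y t1 (A α)) →
      @IsClosed Y t2 (⋃ α, A α)

/-- `X` is separably `λ`-submetrizable: there is a continuous map of `X` onto a separable
metric space which is one-to-one on `⋃ lam`. -/
def SeparablyLamSubmetrizable (X : Type*) [TopologicalSpace X] (lam : Set (Set X)) : Prop :=
  ∃ (Y : Type) (m : MetricSpace Y),
    @SeparableSpace Y m.toPseudoMetricSpace.toUniformSpace.toTopologicalSpace ∧
    ∃ f : X → Y,
      @Continuous X Y _ m.toPseudoMetricSpace.toUniformSpace.toTopologicalSpace f ∧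
      Function.Surjective f ∧ Set.InjOn f (⋃₀ lam)

/-- `R`-separability for a pair of topologies: from every sequence of `t₁`-dense sets one
can pick single points forming a `t₂`-dense set. -/
def RSepBi {Y : Type*} (t1 t2 : TopologicalSpace Y) : Prop :=
  ∀ D : ℕ → Set Y, (∀ n, @Dense Y t1 (D n)) →
    ∃ d : ℕ → Y, (∀ n, d n ∈ D n) ∧ @Dense Y t2 (Set.range d)

/-- `M`-separability for a pair of topologies. -/
def MSepBi {Y : Type*} (t1 t2 : TopologicalSpace Y) : Prop :=
  ∀ D : ℕ → Set Y, (∀ n, @Dense Y t1 (D n)) →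
    ∃ F : ℕ → Set Y, (∀ n, (F n).Finite ∧ F n ⊆ D n) ∧ @Dense Y t2 (⋃ n, F n)

/-- `H`-separability for a pair of topologies. -/
def HSepBi {Y : Type*} (t1 t2 : TopologicalSpace Y) : Prop :=
  ∀ D : ℕ → Set Y, (∀ n, @Dense Y t1 (D n)) →
    ∃ F : ℕ → Set Y, (∀ n, (F n).Finite ∧ F n ⊆ D n) ∧
      ∀ G : Set Y, @IsOpen Y t2 G → G.Nonempty →
        ∀ᶠ n in Filter.atTop, (G ∩ F n).Nonempty

/-- A countable set `D` is groupable with respect to the topology `t`. -/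
def GroupableIn {Y : Type*} (t : TopologicalSpace Y) (D : Set Y) : Prop :=
  ∃ A : ℕ → Set Y, (∀ n, (A n).Finite) ∧ D = ⋃ n, A n ∧
    ∀ G : Set Y, @IsOpen Y t G → G.Nonempty →
      ∀ᶠ n in Filter.atTop, (G ∩ A n).Nonempty

/-- `GN`-separability for a pair of topologies. -/
def GNSepBi {Y : Type*} (t1 t2 : TopologicalSpace Y) : Prop :=
  ∀ D : ℕ → Set Y, (∀ n, @Dense Y t1 (D n)) →
    ∃ d : ℕ → Y, (∀ n, d n ∈ D n) ∧ @Dense Y t2 (Set.range d) ∧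
      GroupableIn t2 (Set.range d)

/-- The `(t₁, t₂)`-Pytkeev property for a bitopological space. -/
def PytkeevBi {Y : Type*} (t1 t2 : TopologicalSpace Y) : Prop :=
  ∀ A : Set Y, ∀ g ∈ @closure Y t1 A, g ∉ A →
    ∃ B : ℕ → Set Y, (∀ n, (B n).Infinite ∧ B n ⊆ A) ∧
      ∀ G ∈ @nhds Y t2 g, ∃ n, B n ⊆ G

/-- A groupable `μ`-f-cover. -/
def GroupableFCover {X : Type*} [TopologicalSpace X] (mu 𝒱 : Set (Set X)) : Prop :=
  𝒱.Countable ∧ IsFCover mu 𝒱 ∧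
    ∃ G : ℕ → Set (Set X), (∀ m, (G m).Finite) ∧
      (Pairwise fun m k => Disjoint (G m) (G k)) ∧ 𝒱 = ⋃ m, G m ∧
      ∀ F ∈ mu, ∀ᶠ m in Filter.atTop, ∃ U ∈ G m, F ⊆ U

/-- Intersections of C-compact sets with functionally closed sets are C-compact. -/
lemma IsCCompact.inter_preimage_closed {X : Type*} [TopologicalSpace X] {A : Set X}
    (hA : IsCCompact A) (g : C(X, ℝ)) {K : Set ℝ} (hK : IsClosed K) :
    IsCCompact (A ∩ g ⁻¹' K) := by
  intro f
  -- the image of `A` under `(f, g)` is compact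
  have hcomp : IsCompact ((fun x => (f x, g x)) '' A) := by
    have hcl : IsClosed ((fun x => (f x, g x)) '' A) := by
      rw [← closure_subset_iff_isClosed]
      rintro ⟨p, q⟩ hpq
      let h : C(X, ℝ) := ⟨fun x => |f x - p| + |g x - q|, by fun_prop⟩
      have h0 : (0 : ℝ) ∈ closure (h '' A) := by
        rw [Metric.mem_closure_iff] at hpq ⊢
        intro ε hε
        obtain ⟨_, ⟨x, hx, rfl⟩, hd⟩ := hpq (ε / 2) (by positivity)
        refine ⟨h x, ⟨x, hx, rfl⟩, ?_⟩
        rw [Prod.dist_eq, max_lt_iff] at hd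
        simp only [Real.dist_eq] at hd
        have h1 := hd.1
        have h2 := hd.2
        rw [abs_sub_comm] at h1 h2
        have h3 : h x = |f x - p| + |g x - q| := rfl
        rw [Real.dist_eq, zero_sub, abs_neg, h3, abs_of_nonneg (by positivity)]
        linarith
      rw [(hA h).isClosed.closure_eq] at h0
      obtain ⟨x, hx, hx0⟩ := h0
      have h3 : |f x - p| + |g x - q| = 0 := hx0
      have h1 : |f x - p| = 0 := by
        linarith [abs_nonneg (f x - p), abs_nonneg (g x - q)]
      have h2 : |g x - q| = 0 := by
        linarith [abs_nonneg (f x - p), abs_nonneg (g x - q)]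
      refine ⟨x, hx, ?_⟩
      rw [abs_eq_zero, sub_eq_zero] at h1 h2
      simp [h1, h2]
    refine ((hA f).prod (hA g)).of_isClosed_subset hcl ?_
    rintro _ ⟨x, hx, rfl⟩
    exact ⟨⟨x, hx, rfl⟩, ⟨x, hx, rfl⟩⟩
  have h2 : f '' (A ∩ g ⁻¹' K) =
      Prod.fst '' (((fun x => (f x, g x)) '' A) ∩ (Prod.snd ⁻¹' K)) := by
    ext y
    constructor
    · rintro ⟨x, ⟨hx, hk⟩, rfl⟩
      exact ⟨(f x, g x), ⟨⟨x, hx, rfl⟩, hk⟩, rfl⟩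
    · rintro ⟨_, ⟨⟨x, hx, rfl⟩, hk⟩, rfl⟩
      exact ⟨x, ⟨hx, hk⟩, rfl⟩
  rw [h2]
  exact (hcomp.inter_right (hK.preimage continuous_snd)).image continuous_fst

lemma isOpen_sub {X : Type*} [TopologicalSpace X] {lam : Set (Set X)} {F : Set X}
    (hF : F ∈ lam) {U : Set ℝ} (hU : IsOpen U) :
    @IsOpen _ (setOpenTopology lam) {f : C(X, ℝ) | f '' F ⊆ U} :=
  TopologicalSpace.isOpen_generateFrom_of_mem ⟨F, hF, U, hU, rfl⟩

lemma MemPsi.union {X : Type*} [TopologicalSpace X] {lam : Set (Set X)} (h : MemPsi lam)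
    {A B : Set X} (hA : A ∈ lam) (hB : B ∈ lam) : A ∪ B ∈ lam := by
  refine h.maximal (insert (A ∪ B) lam) ?_ ?_ (mem_insert _ _)
  · rintro C (rfl | hC)
    · exact (h.nonempty A hA).mono subset_union_left
    · exact h.nonempty C hC
  · apply le_antisymm
    · apply TopologicalSpace.generateFrom_anti
      rintro S ⟨F, hF, U, hU, rfl⟩
      exact ⟨F, mem_insert_of_mem _ hF, U, hU, rfl⟩
    · apply le_generateFrom
      rintro S ⟨F, (rfl | hF), U, hU, rfl⟩
      · have : {f : C(X, ℝ) | f '' (A ∪ B) ⊆ U} =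
            {f : C(X, ℝ) | f '' A ⊆ U} ∩ {f : C(X, ℝ) | f '' B ⊆ U} := by
          ext f
          simp [image_union]
        rw [this]
        exact @IsOpen.inter _ (setOpenTopology lam) _ _ (isOpen_sub hA hU) (isOpen_sub hB hU)
      · exact isOpen_sub hF hU

lemma exists_open_unif {X : Type*} [TopologicalSpace X] {lam : Set (Set X)} (h : MemPsi lam)
    (g : C(X, ℝ)) {A : Set X} (hA : A ∈ lam) {ε : ℝ} (hε : 0 < ε) :
    ∃ O : Set C(X, ℝ), @IsOpen _ (setOpenTopology lam) O ∧ g ∈ O ∧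
      ∀ f ∈ O, ∀ x ∈ A, |f x - g x| < ε := by
  obtain ⟨T, hT, hcov⟩ := (h.ccompact A hA g).elim_nhds_subcover
    (fun t => Metric.ball t (ε / 3)) (fun t _ => Metric.ball_mem_nhds t (by positivity))
  refine ⟨⋂ t ∈ T, {f : C(X, ℝ) |
    f '' (A ∩ g ⁻¹' Metric.closedBall t (ε / 3)) ⊆ Metric.ball t (ε / 2)}, ?_, ?_, ?_⟩
  · refine @isOpen_biInter_finset _ _ (setOpenTopology lam) T _ ?_
    intro t ht
    refine isOpen_sub ?_ Metric.isOpen_ball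
    refine h.hereditary A hA _ inter_subset_left ?_ ?_ ?_
    · obtain ⟨x, hx, hxt⟩ := hT t ht
      refine ⟨x, hx, ?_⟩
      simp only [mem_preimage, hxt]
      exact Metric.mem_closedBall_self (by positivity)
    · exact (h.closed A hA).inter (Metric.isClosed_closedBall.preimage g.continuous)
    · exact (h.ccompact A hA).inter_preimage_closed g Metric.isClosed_closedBall
  · simp only [mem_iInter]
    rintro t ht _ ⟨x, ⟨-, hx⟩, rfl⟩
    exact Metric.closedBall_subset_ball (by linarith) hx
  · intro f hf x hx
    simp only [mem_iInter] at hf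
    have hgx := hcov ⟨x, hx, rfl⟩
    simp only [mem_iUnion] at hgx
    obtain ⟨t, ht, hxt⟩ := hgx
    have h1 := hf t ht ⟨x, ⟨hx, Metric.ball_subset_closedBall hxt⟩, rfl⟩
    rw [Metric.mem_ball, Real.dist_eq, abs_lt] at h1 hxt
    rw [abs_lt]
    constructor <;> linarith [h1.1, h1.2, hxt.1, hxt.2]

lemma exists_unif_of_open {X : Type*} [TopologicalSpace X] {lam : Set (Set X)} (h : MemPsi lam)
    (hne : lam.Nonempty) (g : C(X, ℝ)) {O : Set C(X, ℝ)}
    (hO : @IsOpen _ (setOpenTopology lam) O) (hg : g ∈ O) :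
    ∃ A ∈ lam, ∃ ε > 0, ∀ f : C(X, ℝ), (∀ x ∈ A, |f x - g x| < ε) → f ∈ O := by
  have hO' : TopologicalSpace.GenerateOpen
    {S | ∃ F ∈ lam, ∃ U : Set ℝ, IsOpen U ∧ S = {f : C(X, ℝ) | f '' F ⊆ U}} O := hO
  clear hO
  induction hO' with
  | basic S hS =>
    obtain ⟨F, hF, U, hU, rfl⟩ := hS
    obtain ⟨δ, hδ, hsub⟩ := (h.ccompact F hF g).exists_thickening_subset_open hU hg
    refine ⟨F, hF, δ, hδ, fun f hf => ?_⟩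
    rintro _ ⟨x, hx, rfl⟩
    apply hsub
    rw [Metric.mem_thickening_iff]
    exact ⟨g x, ⟨x, hx, rfl⟩, hf x hx⟩
  | univ =>
    obtain ⟨A, hA⟩ := hne
    exact ⟨A, hA, 1, one_pos, fun _ _ => mem_univ _⟩
  | inter S T _ _ ihS ihT =>
    obtain ⟨A, hA, ε, hε, h1⟩ := ihS hg.1
    obtain ⟨B, hB, δ, hδ, h2⟩ := ihT hg.2
    refine ⟨A ∪ B, h.union hA hB, min ε δ, lt_min hε hδ, fun f hf => ⟨h1 f ?_, h2 f ?_⟩⟩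
    · exact fun x hx => (hf x (Or.inl hx)).trans_le (min_le_left _ _)
    · exact fun x hx => (hf x (Or.inr hx)).trans_le (min_le_right _ _)
  | sUnion 𝒮 _ ih =>
    obtain ⟨S, hS, hgS⟩ := hg
    obtain ⟨A, hA, ε, hε, h1⟩ := ih S hS hgS
    exact ⟨A, hA, ε, hε, fun f hf => ⟨S, hS, h1 f hf⟩⟩

lemma mem_closure_lam {X : Type*} [TopologicalSpace X] {lam : Set (Set X)} (h : MemPsi lam)
    (hne : lam.Nonempty) (g : C(X, ℝ)) (S : Set C(X, ℝ)) :
    g ∈ @closure _ (setOpenTopology lam) S ↔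
      ∀ A ∈ lam, ∀ ε > 0, ∃ f ∈ S, ∀ x ∈ A, |f x - g x| < ε := by
  rw [@mem_closure_iff _ (setOpenTopology lam)]
  constructor
  · intro H A hA ε hε
    obtain ⟨O, hO, hg, hf⟩ := exists_open_unif h g hA hε
    obtain ⟨f, hfO, hfS⟩ := H O hO hg
    exact ⟨f, hfS, hf f hfO⟩
  · intro H O hO hg
    obtain ⟨A, hA, ε, hε, hf⟩ := exists_unif_of_open h hne g hO hg
    obtain ⟨f, hfS, hfA⟩ := H A hA ε hε
    exact ⟨f, hf f hfA, hfS⟩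

lemma isCozero_lt {X : Type*} [TopologicalSpace X] (f g : C(X, ℝ)) (ε : ℝ) :
    IsCozero {x | |f x - g x| < ε} := by
  refine ⟨⟨fun x => max 0 (ε - |f x - g x|), by fun_prop⟩, ?_⟩
  ext x
  simp only [mem_setOf_eq, ContinuousMap.coe_mk]
  constructor
  · intro hx
    exact (lt_max_of_lt_right (by linarith)).ne'
  · intro hx
    by_contra hc
    exact hx (max_eq_left (by linarith))

lemma exists_sep {X : Type*} [TopologicalSpace X] {A U : Set X} (hA : IsCCompact A)
    (hU : IsCozero U) (hAU : A ⊆ U) :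
    ∃ f : C(X, ℝ), (∀ x ∈ A, f x = 0) ∧ ∀ x ∉ U, f x = 1 := by
  obtain ⟨h, rfl⟩ := hU
  have h0 : (0 : ℝ) ∈ (h '' A)ᶜ := by
    rintro ⟨x, hx, hx0⟩
    exact hAU hx hx0
  obtain ⟨δ, hδ, hb⟩ := Metric.isOpen_iff.1 (hA h).isClosed.isOpen_compl 0 h0
  refine ⟨⟨fun x => max 0 (1 - |h x| / δ), by fun_prop⟩, ?_, ?_⟩
  · intro x hx
    have h1 : δ ≤ |h x| := by
      by_contra hc
      push Not at hc
      exact hb (show h x ∈ Metric.ball 0 δ by simpa using hc) ⟨x, hx, rfl⟩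
    have h2 : 1 ≤ |h x| / δ := by rwa [le_div_iff₀ hδ, one_mul]
    exact max_eq_left (by linarith)
  · intro x hx
    have : h x = 0 := by simpa using hx
    simp [this]

lemma sfin_of_fan {X : Type*} [TopologicalSpace X] {lam : Set (Set X)} (hlam : MemPsi lam)
    (hne : lam.Nonempty)
    (H : Sfin (OmegaPt (setOpenTopology lam) 0) (OmegaPt (setOpenTopology lam) 0)) :
    Sfin (fCovers lam) (fCovers lam) := by
  intro 𝒰 h𝒰
  obtain ⟨B, hB, hcl, -⟩ := H (fun n => {f : C(X, ℝ) | ∃ U ∈ 𝒰 n, ∀ x ∉ U, f x = 1}) (by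
    intro n
    constructor
    · rw [mem_closure_lam hlam hne]
      intro A hA ε hε
      obtain ⟨U, hU, hAU⟩ := (h𝒰 n).2.2 A hA
      obtain ⟨f, hf0, hf1⟩ := exists_sep (hlam.ccompact A hA) ((h𝒰 n).2.1 U hU) hAU
      exact ⟨f, ⟨U, hU, hf1⟩, fun x hx => by simpa [hf0 x hx] using hε⟩
    · rintro ⟨U, hU, hf⟩
      have : U ≠ univ := fun hc => (h𝒰 n).1 (hc ▸ hU)
      obtain ⟨x, hx⟩ := (ne_univ_iff_exists_notMem U).1 this
      simpa using hf x hx)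
  have hch : ∀ n, ∀ f : C(X, ℝ), ∃ U : Set X, f ∈ B n → U ∈ 𝒰 n ∧ ∀ x ∉ U, f x = 1 := by
    intro n f
    by_cases hf : f ∈ B n
    · obtain ⟨U, hU⟩ := (hB n).2 hf
      exact ⟨U, fun _ => hU⟩
    · exact ⟨∅, fun hc => absurd hc hf⟩
  choose V hV using hch
  have hsub : ∀ n, V n '' B n ⊆ 𝒰 n := by
    rintro n _ ⟨f, hf, rfl⟩
    exact (hV n f hf).1
  refine ⟨fun n => V n '' B n, fun n => ⟨(hB n).1.image _, hsub n⟩, ?_, ?_, ?_⟩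
  · intro hc
    obtain ⟨n, hn⟩ := mem_iUnion.1 hc
    exact (h𝒰 n).1 (hsub n hn)
  · intro U hc
    obtain ⟨n, hn⟩ := mem_iUnion.1 hc
    exact (h𝒰 n).2.1 U (hsub n hn)
  · intro A hA
    obtain ⟨f, hf, hfA⟩ := (mem_closure_lam hlam hne _ _).1 hcl A hA 1 one_pos
    obtain ⟨n, hn⟩ := mem_iUnion.1 hf
    refine ⟨V n f, mem_iUnion.2 ⟨n, f, hn, rfl⟩, fun x hx => ?_⟩
    by_contra hc
    have := hfA x hx
    simp [(hV n f hn).2 x hc] at this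

lemma fan_of_sfin {X : Type*} [TopologicalSpace X] {lam : Set (Set X)} (hlam : MemPsi lam)
    (hne : lam.Nonempty) (H : Sfin (fCovers lam) (fCovers lam)) (g : C(X, ℝ)) :
    Sfin (OmegaPt (setOpenTopology lam) g) (OmegaPt (setOpenTopology lam) g) := by
  intro S hS
  -- it suffices to treat the closure
  suffices hsuff : ∃ B : ℕ → Set C(X, ℝ), (∀ n, (B n).Finite ∧ B n ⊆ S n) ∧
      ∀ A ∈ lam, ∀ ε > 0, ∃ f ∈ ⋃ n, B n, ∀ x ∈ A, |f x - g x| < ε by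
    obtain ⟨B, hB, hc⟩ := hsuff
    refine ⟨B, hB, (mem_closure_lam hlam hne _ _).2 hc, fun hg => ?_⟩
    obtain ⟨n, hn⟩ := mem_iUnion.1 hg
    exact (hS n).2 ((hB n).2 hn)
  let e : ℕ → ℝ := fun n => 1 / ((n : ℝ) + 1)
  have he : ∀ n, 0 < e n := fun n => Nat.one_div_pos_of_nat
  let W : ℕ → C(X, ℝ) → Set X := fun n f => {x | |f x - g x| < e n}
  by_cases hI : ∃ N, ∀ n ≥ N, ∀ f ∈ S n, W n f ≠ univ
  · obtain ⟨N, hN⟩ := hI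
    have hcov : ∀ n ≥ N, W n '' S n ∈ fCovers lam := by
      intro n hn
      refine ⟨?_, ?_, ?_⟩
      · rintro ⟨f, hf, hfu⟩
        exact hN n hn f hf hfu
      · rintro _ ⟨f, hf, rfl⟩
        exact isCozero_lt f g _
      · intro A hA
        obtain ⟨f, hf, hfA⟩ := (mem_closure_lam hlam hne _ _).1 (hS n).1 A hA (e n) (he n)
        exact ⟨W n f, ⟨f, hf, rfl⟩, hfA⟩
    have hk : ∀ k, ∃ B : ℕ → Set C(X, ℝ), (∀ m, (B m).Finite ∧ B m ⊆ S (N + k + m)) ∧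
        ∀ A ∈ lam, ∃ m, ∃ f ∈ B m, A ⊆ W (N + k + m) f := by
      intro k
      obtain ⟨V, hV, -, -, hVc⟩ := H (fun m => W (N + k + m) '' S (N + k + m))
        (fun m => hcov _ (by omega))
      have hch : ∀ m, ∃ B ⊆ S (N + k + m), B.Finite ∧ W (N + k + m) '' B = V m := by
        intro m
        obtain ⟨B, hB1, hB2, hB3⟩ := Set.exists_subset_image_finite_and (p := fun T => T = V m) |>.1 ⟨V m, (hV m).2, (hV m).1, Eq.refl (V m)⟩
        exact ⟨B, hB1, hB2, hB3⟩
      choose B hB1 hB2 hB3 using hch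
      refine ⟨B, fun m => ⟨hB2 m, hB1 m⟩, fun A hA => ?_⟩
      obtain ⟨U, hU, hAU⟩ := hVc A hA
      obtain ⟨m, hm⟩ := mem_iUnion.1 hU
      rw [← hB3 m] at hm
      obtain ⟨f, hf, rfl⟩ := hm
      exact ⟨m, f, hf, hAU⟩
    choose B hB hBc using hk
    refine ⟨fun n => ⋃ p ∈ {p : ℕ × ℕ | N + p.1 + p.2 = n}, B p.1 p.2, fun n => ⟨?_, ?_⟩, ?_⟩
    · refine Set.Finite.biUnion ?_ (fun p _ => (hB p.1 p.2).1)
      refine ((Set.finite_Iic n).prod (Set.finite_Iic n)).subset ?_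
      rintro ⟨a, b⟩ hab
      simp only [mem_setOf_eq] at hab
      exact ⟨by simp only [mem_Iic]; omega, by simp only [mem_Iic]; omega⟩
    · refine iUnion₂_subset ?_
      rintro ⟨a, b⟩ hab
      have := (hB a b).2
      simp only [mem_setOf_eq] at hab
      rwa [hab] at this
    · intro A hA ε hε
      obtain ⟨k, hk⟩ := exists_nat_one_div_lt hε
      obtain ⟨m, f, hf, hfA⟩ := hBc k A hA
      refine ⟨f, mem_iUnion.2 ⟨N + k + m, mem_iUnion₂.2 ⟨(k, m), rfl, hf⟩⟩, fun x hx => ?_⟩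
      have h1 : |f x - g x| < e (N + k + m) := hfA hx
      have h2 : e (N + k + m) ≤ e k := Nat.one_div_le_one_div (by omega)
      exact h1.trans (h2.trans_lt hk)
  · push Not at hI
    refine ⟨fun n => {f | f ∈ S n ∧ W n f = univ ∧
      ∀ h : ∃ f ∈ S n, W n f = univ, f = h.choose}, fun n => ⟨?_, ?_⟩, ?_⟩
    · refine Set.Subsingleton.finite ?_
      rintro a ⟨ha, ha1, ha2⟩ b ⟨hb, hb1, hb2⟩
      rw [ha2 ⟨a, ha, ha1⟩, hb2 ⟨a, ha, ha1⟩]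
    · exact fun f hf => hf.1
    · intro A hA ε hε
      obtain ⟨k, hk⟩ := exists_nat_one_div_lt hε
      obtain ⟨n, hn, hf⟩ := hI k
      have hex : ∃ f ∈ S n, W n f = univ := hf
      refine ⟨hex.choose, mem_iUnion.2 ⟨n, hex.choose_spec.1, hex.choose_spec.2,
        fun _ => rfl⟩, fun x hx => ?_⟩
      have h1 : x ∈ W n hex.choose := by rw [hex.choose_spec.2]; trivial
      have h2 : e n ≤ e k := Nat.one_div_le_one_div hn
      exact lt_trans h1 (h2.trans_lt hk)

/-- For a Tychonoff space `X` and `λ ∈ Ψ`, `C_λ(X)` has countable fan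
tightness iff `X` has property `S_fin(Λ(λ), Λ(λ))`. -/
theorem fanTightness_iff_sfin_fCovers
    {X : Type*} [TopologicalSpace X] [T35Space X]
    (lam : Set (Set X)) (hlam : MemPsi lam) :
    (∀ g : C(X, ℝ),
        Sfin (OmegaPt (setOpenTopology lam) g) (OmegaPt (setOpenTopology lam) g)) ↔
      Sfin (fCovers lam) (fCovers lam) := by
  rcases isEmpty_or_nonempty X with hX | hX
  · constructor
    · intro _ 𝒰 _
      refine ⟨fun _ => ∅, fun n => ⟨finite_empty, empty_subset _⟩, ?_, ?_, ?_⟩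
      · simp
      · simp
      · intro A hA
        obtain ⟨x, -⟩ := hlam.nonempty A hA
        exact hX.elim x
    · intro _ g S hS
      exfalso
      have hne : (S 0).Nonempty := by
        by_contra hc
        rw [not_nonempty_iff_eq_empty] at hc
        have := (hS 0).1
        rw [hc, @closure_empty _ (setOpenTopology lam)] at this
        exact this
      obtain ⟨f, hf⟩ := hne
      have hfg : f = g := by
        ext x
        exact hX.elim x
      exact (hS 0).2 (hfg ▸ hf)
  · obtain ⟨A, hA, -⟩ := hlam.piNetwork univ isOpen_univ univ_nonempty
    exact ⟨fun H => sfin_of_fan hlam ⟨A, hA⟩ (H 0), fun H g => fan_of_sfin hlam ⟨A, hA⟩ H g⟩
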